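/- Let m > 2, 1 ≤ n ≤ m, and 0 < 2α_j < 1 for j = 1,…,n; set α = α_1+…+α_n, β = (m−2)/2 + α, and γ = 2^{2β−m} Γ(β) π^{−m/2} ∏_{j=1}^n Γ(α_j)/Γ(2α_j). Fix k with 1 ≤ k ≤ n, and let ν_k be a continuous function on S_k = {x̃_k = (x_1,…,x_{k−1},x_{k+1},…,x_m) : x_i > 0 for i ≤ n, i ≠ k} satisfying |ν_k(x̃_k)| ≤ c_k (1 + Σ_{i≠k} x_i²)^{−(1−2α_k+ε_k)/2} for some constants c_k > 0 and ε_k > 0. Define, for ξ ∈ ℝ^m with ξ_1 > 0, …, ξ_n > 0, I_k(ξ) = −γ ∫_{S_k} ν_k(x̃_k) · [∏_{j≤n, j≠k} x_j^{2α_j}] · r_k^{−2β} · F_A^{(n−1)}(β, (α_j)_{j≤n, j≠k}; (2α_j)_{j≤n, j≠k}; (−4x_jξ_j/r_k²)_{j≤n, j≠k}) dx̃_k, where r_k² = ξ_k² + Σ_{i≠k} (x_i − ξ_i)². Then for every l ≤ n with l ≠ k and every fixed point with the remaining coordinates positive, lim_{ξ_l→0+} ξ_l^{2α_l} ∂I_k/∂ξ_l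 = 0. -/

import Mathlib

open MeasureTheory Real Filter Topology

/-- The Lauricella function `F_A` (in finitely many variables indexed by `ι`) defined
through its Euler-type integral representation. -/
noncomputable def lauricellaFA {ι : Type*} [Fintype ι] (a : ℝ) (b c x : ι → ℝ) : ℝ :=
  (∏ i, Real.Gamma (c i) / (Real.Gamma (b i) * Real.Gamma (c i - b i))) *
    ∫ u in Set.univ.pi (fun _ : ι => Set.Icc (0 : ℝ) 1),
      (∏ i, u i ^ (b i - 1) * (1 - u i) ^ (c i - b i - 1)) * (1 - ∑ i, x i * u i) ^ (-a)

/-!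
Since `(1 - u) (y - x)² + u (y + x)² = (y - x)² + 4 y x u`, Euler's integral writes the kernel
`r_k^(-2β) F_A` as the expectation of `R_u^(-β)`, where `R_u = r_k² + ∑ 4 y_j ξ_j u_j` and the
`u_j` are independent `Beta(α_j, α_j)` variables. Completing squares, `R_u = A_u + |ξ' - q_u|²`
with `A_u ≥ 0`, where `ξ'` collects the coordinates of `ξ` other than `ξ_k`, so `√R_u` is
1-Lipschitz in `ξ'`. As `R_u ≥ r_k²` and `r_k²` is comparable to `1 + |y|²` for bounded `ξ'` and
fixed `ξ_k ≠ 0`, the kernel is Lipschitz in `ξ'` with constant `O((1 + |y|²)^(-β - 1/2))`. The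
decay of `ν_k` makes this integrable over the face, hence `I_k` is Lipschitz up to `ξ_l = 0`: the
derivative `∂I_k/∂ξ_l` stays bounded and the weight `ξ_l^(2α_l)` sends the product to zero.
-/

section RealPowers

lemma abs_rpow_neg_sub_rpow_neg_le {p d a b : ℝ} (hp : 0 ≤ p) (hd : 0 < d) (ha : d ≤ a)
    (hb : d ≤ b) : |a ^ (-p) - b ^ (-p)| ≤ p * d ^ (-p - 1) * |a - b| := by
  refine (convex_Ici d).norm_image_sub_le_of_norm_hasDerivWithin_le (f := fun x => x ^ (-p))
    (f' := fun x => -p * x ^ (-p - 1)) (fun x hx => ?_) (fun x hx => ?_) hb ha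
  · exact (hasDerivAt_rpow_const (Or.inl (hd.trans_le hx).ne')).hasDerivWithinAt
  · rw [norm_mul, norm_neg, norm_of_nonneg hp,
      norm_of_nonneg (rpow_nonneg (hd.le.trans hx) _)]
    gcongr ?_ * ?_
    exact rpow_le_rpow_of_nonpos hd hx (by linarith)

lemma abs_sqrt_add_sq_sub_sqrt_add_sq_le {A : ℝ} (hA : 0 ≤ A) (a b : ℝ) :
    |√(A + a ^ 2) - √(A + b ^ 2)| ≤ |a - b| := by
  have h_norm (x : ℝ) : √(A + x ^ 2) = ‖(⟨√A, x⟩ : ℂ)‖ := by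
    rw [Complex.norm_eq_sqrt_sq_add_sq, sq_sqrt hA]
  have h_sub : (⟨√A, a⟩ - ⟨√A, b⟩ : ℂ) = ((a - b : ℝ) : ℂ) * Complex.I := by
    apply Complex.ext <;> simp
  rw [h_norm, h_norm]
  refine (abs_norm_sub_norm_le _ _).trans_eq ?_
  rw [h_sub, norm_mul, Complex.norm_I, mul_one, Complex.norm_real, norm_eq_abs]

lemma abs_add_sq_rpow_neg_sub_le {A D a b β : ℝ} (hA : 0 ≤ A) (hβ : 0 ≤ β) (hD : 0 < D)
    (ha : D ≤ A + a ^ 2) (hb : D ≤ A + b ^ 2) :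
    |(A + a ^ 2) ^ (-β) - (A + b ^ 2) ^ (-β)| ≤ 2 * β * D ^ (-β - 1 / 2) * |a - b| := by
  have h_sqrt {x : ℝ} (hx : 0 ≤ x) (p : ℝ) : x ^ p = √x ^ (2 * p) := by
    rw [rpow_mul (sqrt_nonneg x), rpow_two, sq_sqrt hx]
  calc |(A + a ^ 2) ^ (-β) - (A + b ^ 2) ^ (-β)|
      = |√(A + a ^ 2) ^ (-(2 * β)) - √(A + b ^ 2) ^ (-(2 * β))| := by
        rw [h_sqrt (hD.le.trans ha), h_sqrt (hD.le.trans hb), mul_neg]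
    _ ≤ 2 * β * √D ^ (-(2 * β) - 1) * |√(A + a ^ 2) - √(A + b ^ 2)| :=
        abs_rpow_neg_sub_rpow_neg_le (by positivity) (sqrt_pos.2 hD) (sqrt_le_sqrt ha)
          (sqrt_le_sqrt hb)
    _ ≤ 2 * β * √D ^ (-(2 * β) - 1) * |a - b| := by
        refine mul_le_mul_of_nonneg_left ?_ (by positivity)
        exact abs_sqrt_add_sq_sub_sqrt_add_sq_le hA a b
    _ = 2 * β * D ^ (-β - 1 / 2) * |a - b| := by
        rw [h_sqrt hD.le (-β - 1 / 2)]
        ring_nf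

lemma tendsto_rpow_mul_deriv_of_lipschitzOnWith {f : ℝ → ℝ} {L : NNReal} {a δ : ℝ} (ha : 0 < a)
    (hδ : 0 < δ) (hf : LipschitzOnWith L f (Set.Ioo 0 δ)) :
    Tendsto (fun t => t ^ a * deriv f t) (𝓝[>] 0) (𝓝 0) := by
  have h_rpow : Tendsto (fun t : ℝ => t ^ a) (𝓝[>] 0) (𝓝 0) := by
    simpa [zero_rpow ha.ne'] using
      ((continuousAt_rpow_const 0 a (Or.inr ha.le)).tendsto.mono_left nhdsWithin_le_nhds)
  refine h_rpow.zero_mul_isBoundedUnder_le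
    (isBoundedUnder_of_eventually_le (a := (L : ℝ)) ?_)
  filter_upwards [Ioo_mem_nhdsGT hδ] with t ht
  exact norm_deriv_le_of_lipschitzOn (isOpen_Ioo.mem_nhds ht) hf

end RealPowers

section Integrals

lemma abs_integral_sub_integral_le_of_ae {Ω : Type*} [MeasurableSpace Ω]
    {μ : Measure Ω} [IsProbabilityMeasure μ] {f g : Ω → ℝ} {C : ℝ} (hf : Integrable f μ)
    (hg : Integrable g μ) (h : ∀ᵐ ω ∂μ, |f ω - g ω| ≤ C) :
    |∫ ω, f ω ∂μ - ∫ ω, g ω ∂μ| ≤ C := by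
  rw [← integral_sub hf hg]
  simpa using norm_integral_le_of_norm_le_const (f := fun ω => f ω - g ω) h

lemma pi_withDensity_ofReal {κ : Type*} [Fintype κ] {E : κ → Type*}
    [∀ i, MeasurableSpace (E i)] {μ : ∀ i, Measure (E i)} [∀ i, SigmaFinite (μ i)]
    {f : ∀ i, E i → ℝ} (hf : ∀ i, Integrable (f i) (μ i)) (hf₀ : ∀ i x, 0 ≤ f i x) :
    Measure.pi (fun i => (μ i).withDensity fun x => ENNReal.ofReal (f i x)) =
      (Measure.pi μ).withDensity fun x => ENNReal.ofReal (∏ i, f i (x i)) := by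
  have _ (i : κ) : IsFiniteMeasure ((μ i).withDensity fun x => ENNReal.ofReal (f i x)) :=
    isFiniteMeasure_withDensity_ofReal (hf i).2
  refine Measure.pi_eq fun s hs => ?_
  rw [withDensity_apply _ (.univ_pi hs), Measure.restrict_pi_pi,
    ← ofReal_integral_eq_lintegral_ofReal
      (Integrable.fintype_prod_dep fun i => (hf i).restrict)
      (.of_forall fun x => Finset.prod_nonneg fun i _ => hf₀ i (x i)),
    integral_fintype_prod_eq_prod,
    ENNReal.ofReal_prod_of_nonneg fun i _ => integral_nonneg (hf₀ i)]
  refine Finset.prod_congr rfl fun i _ => ?_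
  rw [withDensity_apply _ (hs i),
    ofReal_integral_eq_lintegral_ofReal (hf i).restrict (.of_forall (hf₀ i))]

lemma integrable_one_add_sum_sq_rpow {ι : Type*} [Fintype ι] {r : ℝ}
    (hr : Fintype.card ι < r) :
    Integrable fun y : ι → ℝ => (1 + ∑ i, y i ^ 2) ^ (-r / 2) := by
  have h := (PiLp.volume_preserving_toLp ι).integrable_comp_of_integrable
    (integrable_rpow_neg_one_add_norm_sq (E := EuclideanSpace ℝ ι) (r := r) (by simpa using hr))
  simpa [Function.comp_def, EuclideanSpace.norm_sq_eq] using h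

end Integrals

section Beta

open ProbabilityTheory

lemma betaPDFReal_nonneg {a b : ℝ} (ha : 0 < a) (hb : 0 < b) (x : ℝ) :
    0 ≤ betaPDFReal a b x := by
  by_cases hx : 0 < x ∧ x < 1
  · exact (betaPDFReal_pos hx.1 hx.2 ha hb).le
  · exact (if_neg hx).ge

lemma integrable_betaPDFReal {a b : ℝ} (ha : 0 < a) (hb : 0 < b) :
    Integrable (betaPDFReal a b) := by
  refine ⟨(measurable_betaPDFReal a b).aestronglyMeasurable, ?_⟩
  rw [hasFiniteIntegral_iff_ofReal (.of_forall (betaPDFReal_nonneg ha hb))]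
  exact (lintegral_betaPDF_eq_one ha hb).trans_lt ENNReal.one_lt_top

lemma ae_betaMeasure_mem_Icc (a b : ℝ) : ∀ᵐ x ∂betaMeasure a b, x ∈ Set.Icc (0 : ℝ) 1 := by
  refine (ae_withDensity_iff (measurable_betaPDFReal a b).ennreal_ofReal).2
    (.of_forall fun x hx => ?_)
  contrapose! hx
  rcases not_and_or.1 hx with h | h
  · exact betaPDF_eq_zero_of_nonpos (not_le.1 h).le
  · exact betaPDF_eq_zero_of_one_le (not_le.1 h).le

variable {κ : Type*} [Fintype κ] {b c : κ → ℝ}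

/-- The joint law of independent `Beta(b i, c i - b i)` variables, which is the normalised weight
of the Euler integral of `lauricellaFA`. -/
noncomputable def betaProduct (b c : κ → ℝ) : Measure (κ → ℝ) :=
  Measure.pi fun i => betaMeasure (b i) (c i - b i)

lemma isProbabilityMeasure_betaProduct (hb : ∀ i, 0 < b i) (hbc : ∀ i, b i < c i) :
    IsProbabilityMeasure (betaProduct b c) := by
  have _ (i : κ) := isProbabilityMeasureBeta (hb i) (sub_pos.2 (hbc i))
  unfold betaProduct
  infer_instance

lemma ae_betaProduct_mem_Icc (hb : ∀ i, 0 < b i) (hbc : ∀ i, b i < c i) :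
    ∀ᵐ u ∂betaProduct b c, ∀ i, u i ∈ Set.Icc (0 : ℝ) 1 := by
  have _ (i : κ) := isProbabilityMeasureBeta (hb i) (sub_pos.2 (hbc i))
  exact ae_all_iff.2 fun i =>
    Measure.tendsto_eval_ae_ae (ae_betaMeasure_mem_Icc (b i) (c i - b i))

lemma prod_betaPDFReal_eq_indicator (u : κ → ℝ) :
    ∏ i, betaPDFReal (b i) (c i - b i) (u i) =
      (Set.univ.pi fun _ => Set.Ioo (0 : ℝ) 1).indicator
        (fun u => (∏ i, Gamma (c i) / (Gamma (b i) * Gamma (c i - b i))) *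
          ∏ i, u i ^ (b i - 1) * (1 - u i) ^ (c i - b i - 1)) u := by
  by_cases hu : u ∈ Set.univ.pi fun _ => Set.Ioo (0 : ℝ) 1
  · rw [Set.indicator_of_mem hu, ← Finset.prod_mul_distrib]
    refine Finset.prod_congr rfl fun i _ => ?_
    have hui : 0 < u i ∧ u i < 1 := hu i (Set.mem_univ i)
    rw [betaPDFReal, if_pos hui, beta, add_sub_cancel, one_div_div, mul_assoc]
  · rw [Set.indicator_of_notMem hu]
    obtain ⟨i, hi⟩ : ∃ i, ¬(0 < u i ∧ u i < 1) := by simpa [Set.mem_pi] using hu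
    exact Finset.prod_eq_zero (Finset.mem_univ i) (if_neg hi)

theorem lauricellaFA_eq_integral_betaProduct (hb : ∀ i, 0 < b i) (hbc : ∀ i, b i < c i) (a : ℝ)
    (x : κ → ℝ) :
    lauricellaFA a b c x = ∫ u, (1 - ∑ i, x i * u i) ^ (-a) ∂betaProduct b c := by
  have h_nonneg (i : κ) := betaPDFReal_nonneg (hb i) (sub_pos.2 (hbc i))
  have h_density : betaProduct b c = volume.withDensity fun u =>
      ENNReal.ofReal (∏ i, betaPDFReal (b i) (c i - b i) (u i)) :=
    pi_withDensity_ofReal (fun i => integrable_betaPDFReal (hb i) (sub_pos.2 (hbc i))) h_nonneg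
  rw [h_density, integral_withDensity_eq_integral_toReal_smul (by fun_prop) (by simp),
    lauricellaFA, volume_pi, ← setIntegral_congr_set Measure.pi_Ioo_ae_eq_pi_Icc,
    ← integral_const_mul, ← integral_indicator (.univ_pi fun _ => measurableSet_Ioo)]
  refine integral_congr_ae (.of_forall fun u => ?_)
  beta_reduce
  rw [ENNReal.toReal_ofReal (Finset.prod_nonneg fun i _ => h_nonneg i (u i)),
    prod_betaPDFReal_eq_indicator, smul_eq_mul]
  by_cases hu : u ∈ Set.univ.pi fun _ : κ => Set.Ioo (0 : ℝ) 1 <;> simp [hu, mul_assoc]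

lemma stronglyMeasurable_lauricellaFA (a : ℝ) (b c : κ → ℝ) :
    StronglyMeasurable (lauricellaFA a b c) := by
  refine (StronglyMeasurable.integral_prod_right ?_).const_mul _
  exact Measurable.stronglyMeasurable (by unfold Function.uncurry; fun_prop)

end Beta

section Kernel

variable {ι κ : Type*} [Fintype ι] [Fintype κ]

/-- The squared distance `r_k²` between the point `y` of a face and a point at distance `|h|` from
the face whose remaining coordinates are `x`. -/
def faceDistSq (h : ℝ) (y x : ι → ℝ) : ℝ :=
  h ^ 2 + ∑ i, (y i - x i) ^ 2

/-- The factor of the integrand of `I_k` that depends on the field point `(h, x)`. The map `e`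
selects the singular coordinates among the coordinates of the face. -/
noncomputable def faceKernel (e : κ → ι) (β : ℝ) (b c : κ → ℝ) (h : ℝ) (y x : ι → ℝ) : ℝ :=
  faceDistSq h y x ^ (-β) *
    lauricellaFA β b c fun j => -4 * y (e j) * x (e j) / faceDistSq h y x

/-- The base of the Euler integrand of `faceKernel`. For `u j ∈ {0, 1}` it is the squared distance
from the field point to the mirror image of `y` in the hyperplanes `y (e j) = 0` with `u j = 1`. -/
def mirrorDistSq (e : κ → ι) (h : ℝ) (y x : ι → ℝ) (u : κ → ℝ) : ℝ :=
  faceDistSq h y x + ∑ j, 4 * y (e j) * x (e j) * u j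

variable {e : κ → ι} {β h : ℝ} {b c : κ → ℝ} {y : ι → ℝ}

lemma faceDistSq_pos (hh : h ≠ 0) (y x : ι → ℝ) : 0 < faceDistSq h y x :=
  add_pos_of_pos_of_nonneg (by positivity) (Finset.sum_nonneg fun _ _ => sq_nonneg _)

lemma faceDistSq_le_mirrorDistSq {x : ι → ℝ} (hyx : ∀ j, 0 ≤ y (e j) * x (e j)) {u : κ → ℝ}
    (hu : ∀ j, 0 ≤ u j) : faceDistSq h y x ≤ mirrorDistSq e h y x u := by
  refine le_add_of_nonneg_right (Finset.sum_nonneg fun j _ => mul_nonneg ?_ (hu j))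
  linarith [hyx j]

lemma exists_mirrorDistSq_eq_add_norm_sub_sq (he : e.Injective) (h : ℝ) (y : ι → ℝ) {u : κ → ℝ}
    (hu : ∀ j, u j ∈ Set.Icc (0 : ℝ) 1) :
    ∃ A, 0 ≤ A ∧ ∃ q : EuclideanSpace ℝ ι, ∀ x : EuclideanSpace ℝ ι,
      mirrorDistSq e h y x.ofLp u = A + ‖x - q‖ ^ 2 := by
  set v : ι → ℝ := Function.extend e u 0 with hv
  have hv_mem (i : ι) : v i ∈ Set.Icc (0 : ℝ) 1 := by
    by_cases hi : ∃ j, e j = i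
    · obtain ⟨j, rfl⟩ := hi
      simpa [hv, he.extend_apply] using hu j
    · simp [hv, Function.extend_apply' _ _ _ hi]
  have h_sum (x : ι → ℝ) :
      ∑ j, 4 * y (e j) * x (e j) * u j = ∑ i, 4 * y i * x i * v i := by
    refine Fintype.sum_of_injective e he _ _ (fun i hi => ?_) fun j => ?_
    · simp [hv, Function.extend_apply' _ _ _ hi]
    · simp [hv, he.extend_apply]
  refine ⟨h ^ 2 + ∑ i, 4 * (v i * (1 - v i)) * y i ^ 2, ?_,
    WithLp.toLp 2 fun i => (1 - 2 * v i) * y i, fun x => ?_⟩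
  · refine add_nonneg (sq_nonneg h) (Finset.sum_nonneg fun i _ => ?_)
    have := mul_nonneg (hv_mem i).1 (sub_nonneg.2 (hv_mem i).2)
    positivity
  · rw [mirrorDistSq, faceDistSq, h_sum, EuclideanSpace.real_norm_sq_eq, add_assoc, add_assoc,
      ← Finset.sum_add_distrib, ← Finset.sum_add_distrib]
    congr 1
    refine Finset.sum_congr rfl fun i _ => ?_
    rw [PiLp.sub_apply]
    ring

lemma abs_mirrorDistSq_rpow_neg_sub_le (he : e.Injective) (hβ : 0 ≤ β) {D : ℝ} (hD : 0 < D)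
    {u : κ → ℝ} (hu : ∀ j, u j ∈ Set.Icc (0 : ℝ) 1) {x x' : EuclideanSpace ℝ ι}
    (hx : D ≤ mirrorDistSq e h y x.ofLp u) (hx' : D ≤ mirrorDistSq e h y x'.ofLp u) :
    |mirrorDistSq e h y x.ofLp u ^ (-β) - mirrorDistSq e h y x'.ofLp u ^ (-β)| ≤
      2 * β * D ^ (-β - 1 / 2) * dist x x' := by
  obtain ⟨A, hA, q, h_eq⟩ := exists_mirrorDistSq_eq_add_norm_sub_sq he h y hu
  rw [h_eq] at hx hx' ⊢
  rw [h_eq]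
  refine (abs_add_sq_rpow_neg_sub_le hA hβ hD hx hx').trans ?_
  gcongr
  simpa [dist_eq_norm] using abs_norm_sub_norm_le (x - q) (x' - q)

lemma faceKernel_eq_integral_mirrorDistSq (hb : ∀ j, 0 < b j) (hbc : ∀ j, b j < c j)
    (β : ℝ) (hh : h ≠ 0) {x : ι → ℝ} (hyx : ∀ j, 0 ≤ y (e j) * x (e j)) :
    faceKernel e β b c h y x = ∫ u, mirrorDistSq e h y x u ^ (-β) ∂betaProduct b c := by
  have hr := faceDistSq_pos hh y x
  rw [faceKernel, lauricellaFA_eq_integral_betaProduct hb hbc, ← integral_const_mul]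
  refine integral_congr_ae ?_
  filter_upwards [ae_betaProduct_mem_Icc hb hbc] with u hu
  have h_mirror := faceDistSq_le_mirrorDistSq (h := h) hyx fun j => (hu j).1
  have h_base : 1 - ∑ j, -4 * y (e j) * x (e j) / faceDistSq h y x * u j =
      mirrorDistSq e h y x u / faceDistSq h y x := by
    rw [mirrorDistSq, add_div, div_self hr.ne', Finset.sum_div, sub_eq_add_neg,
      ← Finset.sum_neg_distrib]
    congr! 2 with j
    ring
  rw [h_base, ← mul_rpow hr.le (div_nonneg (hr.le.trans h_mirror) hr.le),
    mul_div_cancel₀ _ hr.ne']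

lemma ae_abs_mirrorDistSq_rpow_neg_le (hb : ∀ j, 0 < b j) (hbc : ∀ j, b j < c j)
    (hβ : 0 ≤ β) (hh : h ≠ 0) {x : ι → ℝ} (hyx : ∀ j, 0 ≤ y (e j) * x (e j)) :
    ∀ᵐ u ∂betaProduct b c, |mirrorDistSq e h y x u ^ (-β)| ≤ faceDistSq h y x ^ (-β) := by
  have hr := faceDistSq_pos hh y x
  filter_upwards [ae_betaProduct_mem_Icc hb hbc] with u hu
  have h_mirror := faceDistSq_le_mirrorDistSq (h := h) hyx fun j => (hu j).1
  rw [abs_of_nonneg (rpow_nonneg (hr.le.trans h_mirror) _)]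
  exact rpow_le_rpow_of_nonpos hr h_mirror (neg_nonpos.2 hβ)

lemma integrable_mirrorDistSq_rpow_neg (hb : ∀ j, 0 < b j) (hbc : ∀ j, b j < c j)
    (hβ : 0 ≤ β) (hh : h ≠ 0) {x : ι → ℝ} (hyx : ∀ j, 0 ≤ y (e j) * x (e j)) :
    Integrable (fun u => mirrorDistSq e h y x u ^ (-β)) (betaProduct b c) := by
  have _ := isProbabilityMeasure_betaProduct hb hbc
  refine .of_bound (Measurable.aestronglyMeasurable ?_) _
    (ae_abs_mirrorDistSq_rpow_neg_le hb hbc hβ hh hyx)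
  unfold mirrorDistSq
  fun_prop

lemma abs_faceKernel_le (hb : ∀ j, 0 < b j) (hbc : ∀ j, b j < c j) (hβ : 0 ≤ β) (hh : h ≠ 0)
    {x : ι → ℝ} (hyx : ∀ j, 0 ≤ y (e j) * x (e j)) :
    |faceKernel e β b c h y x| ≤ faceDistSq h y x ^ (-β) := by
  have _ := isProbabilityMeasure_betaProduct hb hbc
  rw [faceKernel_eq_integral_mirrorDistSq hb hbc β hh hyx]
  simpa using norm_integral_le_of_norm_le_const (f := fun u => mirrorDistSq e h y x u ^ (-β))
    (ae_abs_mirrorDistSq_rpow_neg_le hb hbc hβ hh hyx)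

lemma abs_faceKernel_sub_le (he : e.Injective) (hb : ∀ j, 0 < b j) (hbc : ∀ j, b j < c j)
    (hβ : 0 ≤ β) (hh : h ≠ 0) {x x' : EuclideanSpace ℝ ι}
    (hyx : ∀ j, 0 ≤ y (e j) * x (e j)) (hyx' : ∀ j, 0 ≤ y (e j) * x' (e j)) {D : ℝ}
    (hD : 0 < D) (hx : D ≤ faceDistSq h y x.ofLp) (hx' : D ≤ faceDistSq h y x'.ofLp) :
    |faceKernel e β b c h y x.ofLp - faceKernel e β b c h y x'.ofLp| ≤
      2 * β * D ^ (-β - 1 / 2) * dist x x' := by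
  have _ := isProbabilityMeasure_betaProduct hb hbc
  rw [faceKernel_eq_integral_mirrorDistSq hb hbc β hh hyx,
    faceKernel_eq_integral_mirrorDistSq hb hbc β hh hyx']
  refine abs_integral_sub_integral_le_of_ae
    (integrable_mirrorDistSq_rpow_neg hb hbc hβ hh hyx)
    (integrable_mirrorDistSq_rpow_neg hb hbc hβ hh hyx') ?_
  filter_upwards [ae_betaProduct_mem_Icc hb hbc] with u hu
  have hu₀ (j : κ) : 0 ≤ u j := (hu j).1
  exact abs_mirrorDistSq_rpow_neg_sub_le he hβ hD hu
    (hx.trans (faceDistSq_le_mirrorDistSq hyx hu₀))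
    (hx'.trans (faceDistSq_le_mirrorDistSq hyx' hu₀))

lemma measurable_faceKernel_left (e : κ → ι) (β : ℝ) (b c : κ → ℝ) (h : ℝ) (x : ι → ℝ) :
    Measurable fun y => faceKernel e β b c h y x := by
  have h_dist : Measurable fun y => faceDistSq h y x := by
    unfold faceDistSq
    fun_prop
  refine (h_dist.pow_const _).mul
    ((stronglyMeasurable_lauricellaFA β b c).measurable.comp (measurable_pi_lambda _ fun j => ?_))
  fun_prop

end Kernel

section Decay

variable {ι κ : Type*} [Fintype ι] [Fintype κ]

lemma one_le_one_add_sum_sq (y : ι → ℝ) : 1 ≤ 1 + ∑ i, y i ^ 2 :=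
  le_add_of_nonneg_right (Finset.sum_nonneg fun _ _ => sq_nonneg _)

lemma exists_one_add_sum_sq_le_mul_faceDistSq {h : ℝ} (hh : h ≠ 0) (R : ℝ) :
    ∃ M > 0, ∀ x : EuclideanSpace ℝ ι, ‖x‖ ≤ R → ∀ y : ι → ℝ,
      1 + ∑ i, y i ^ 2 ≤ M * faceDistSq h y x.ofLp := by
  refine ⟨2 + (1 + 2 * R ^ 2) / h ^ 2, by positivity, fun x hx y => ?_⟩
  have h_triangle : ∑ i, y i ^ 2 ≤ 2 * ∑ i, (y i - x i) ^ 2 + 2 * R ^ 2 := calc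
    ∑ i, y i ^ 2 ≤ ∑ i, (2 * (y i - x i) ^ 2 + 2 * x i ^ 2) :=
      Finset.sum_le_sum fun i _ => by linarith [sq_nonneg (y i - 2 * x i)]
    _ = 2 * ∑ i, (y i - x i) ^ 2 + 2 * ‖x‖ ^ 2 := by
      rw [Finset.sum_add_distrib, ← Finset.mul_sum, ← Finset.mul_sum,
        EuclideanSpace.real_norm_sq_eq]
    _ ≤ 2 * ∑ i, (y i - x i) ^ 2 + 2 * R ^ 2 := by gcongr
  have h_sum : 0 ≤ ∑ i, (y i - x i) ^ 2 := Finset.sum_nonneg fun _ _ => sq_nonneg _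
  calc 1 + ∑ i, y i ^ 2
      ≤ 2 * (h ^ 2 + ∑ i, (y i - x i) ^ 2) + (1 + 2 * R ^ 2) / h ^ 2 * h ^ 2 := by
        rw [div_mul_cancel₀ _ (pow_ne_zero 2 hh)]
        linarith [sq_nonneg h]
    _ ≤ (2 + (1 + 2 * R ^ 2) / h ^ 2) * faceDistSq h y x.ofLp := by
        rw [faceDistSq, add_mul]
        gcongr
        exact le_add_of_nonneg_right h_sum

lemma rpow_neg_le_mul_rpow_neg {T M D p : ℝ} (hT : 0 < T) (hM : 0 < M) (h : T ≤ M * D)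
    (hp : 0 ≤ p) : D ^ (-p) ≤ M ^ p * T ^ (-p) := by
  calc D ^ (-p) ≤ (T / M) ^ (-p) :=
        rpow_le_rpow_of_nonpos (by positivity) ((div_le_iff₀' hM).2 h) (neg_nonpos.2 hp)
    _ = M ^ p * T ^ (-p) := by
        rw [div_rpow hT.le hM.le, rpow_neg hM.le, div_inv_eq_mul, mul_comm]

lemma abs_mul_le_mul_rpow_add {T C C' p q a b : ℝ} (hT : 0 < T) (ha : |a| ≤ C * T ^ p)
    (hb : |b| ≤ C' * T ^ q) : |a * b| ≤ C * C' * T ^ (p + q) := calc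
  |a * b| = |a| * |b| := abs_mul a b
  _ ≤ C * T ^ p * (C' * T ^ q) :=
    mul_le_mul ha hb (abs_nonneg b) ((abs_nonneg a).trans ha)
  _ = C * C' * T ^ (p + q) := by
    rw [rpow_add hT]
    ring

lemma prod_rpow_two_mul_le (e : κ → ι) {α : κ → ℝ} (hα : ∀ j, 0 ≤ α j) {y : ι → ℝ}
    (hy : ∀ j, 0 ≤ y (e j)) :
    ∏ j, y (e j) ^ (2 * α j) ≤ (1 + ∑ i, y i ^ 2) ^ ∑ j, α j := by
  rw [rpow_sum_of_pos (zero_lt_one.trans_le (one_le_one_add_sum_sq y))]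
  refine Finset.prod_le_prod (fun j _ => rpow_nonneg (hy j) _) fun j _ => ?_
  rw [rpow_mul (hy j), rpow_two]
  refine rpow_le_rpow (sq_nonneg _) ?_ (hα j)
  exact (Finset.single_le_sum (fun i _ => sq_nonneg (y i)) (Finset.mem_univ (e j))).trans
    (le_add_of_nonneg_left zero_le_one)

lemma abs_mul_prod_rpow_two_mul_le (e : κ → ι) {α : κ → ℝ} (hα : ∀ j, 0 ≤ α j) {y : ι → ℝ}
    (hy : ∀ j, 0 ≤ y (e j)) {a C q : ℝ} (ha : |a| ≤ C * (1 + ∑ i, y i ^ 2) ^ q) :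
    |a * ∏ j, y (e j) ^ (2 * α j)| ≤ C * (1 + ∑ i, y i ^ 2) ^ (q + ∑ j, α j) := by
  have h_prod : |∏ j, y (e j) ^ (2 * α j)| ≤ 1 * (1 + ∑ i, y i ^ 2) ^ ∑ j, α j := by
    rw [one_mul, abs_of_nonneg (Finset.prod_nonneg fun j _ => rpow_nonneg (hy j) _)]
    exact prod_rpow_two_mul_le e hα hy
  simpa using abs_mul_le_mul_rpow_add (zero_lt_one.trans_le (one_le_one_add_sum_sq y)) ha h_prod

end Decay

section Potential

variable {ι κ : Type*} [Fintype ι] [Fintype κ] {e : κ → ι} {β h r C : ℝ} {b c : κ → ℝ}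
  {S : Set (ι → ℝ)} {g : (ι → ℝ) → ℝ}

lemma integrableOn_mul_faceKernel (hb : ∀ j, 0 < b j) (hbc : ∀ j, b j < c j) (hβ : 0 ≤ β)
    (hh : h ≠ 0) (hS : MeasurableSet S) (hS₀ : ∀ y ∈ S, ∀ j, 0 ≤ y (e j))
    (hg : AEStronglyMeasurable g (volume.restrict S)) (hr : Fintype.card ι < r)
    (hgC : ∀ y ∈ S, |g y| ≤ C * (1 + ∑ i, y i ^ 2) ^ (β - r / 2)) {x : EuclideanSpace ℝ ι}
    (hx : ∀ j, 0 ≤ x (e j)) :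
    IntegrableOn (fun y => g y * faceKernel e β b c h y x.ofLp) S := by
  obtain ⟨M, hM, h_dist⟩ := exists_one_add_sum_sq_le_mul_faceDistSq (ι := ι) hh ‖x‖
  refine ((integrable_one_add_sum_sq_rpow hr).restrict.const_mul (C * M ^ β)).mono'
    (hg.mul (measurable_faceKernel_left e β b c h x.ofLp).aestronglyMeasurable) ?_
  refine ae_restrict_of_forall_mem hS fun y hy => ?_
  have hT := zero_lt_one.trans_le (one_le_one_add_sum_sq y)
  have h_kernel : |faceKernel e β b c h y x.ofLp| ≤ M ^ β * (1 + ∑ i, y i ^ 2) ^ (-β) :=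
    (abs_faceKernel_le hb hbc hβ hh fun j => mul_nonneg (hS₀ y hy j) (hx j)).trans
      (rpow_neg_le_mul_rpow_neg hT hM (h_dist x le_rfl y) hβ)
  refine (abs_mul_le_mul_rpow_add hT (hgC y hy) h_kernel).trans_eq ?_
  ring_nf

lemma exists_lipschitzOnWith_integral_faceKernel (he : e.Injective) (hb : ∀ j, 0 < b j)
    (hbc : ∀ j, b j < c j) (hβ : 0 ≤ β) (hh : h ≠ 0) (hS : MeasurableSet S)
    (hS₀ : ∀ y ∈ S, ∀ j, 0 ≤ y (e j)) (hg : AEStronglyMeasurable g (volume.restrict S))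
    (hr : Fintype.card ι < r)
    (hgC : ∀ y ∈ S, |g y| ≤ C * (1 + ∑ i, y i ^ 2) ^ (β - r / 2)) (R : ℝ) :
    ∃ L : NNReal, LipschitzOnWith L
      (fun x : EuclideanSpace ℝ ι => ∫ y in S, g y * faceKernel e β b c h y x.ofLp)
      {x | (∀ j, 0 ≤ x (e j)) ∧ ‖x‖ ≤ R} := by
  obtain ⟨M, hM, h_dist⟩ := exists_one_add_sum_sq_le_mul_faceDistSq (ι := ι) hh R
  set N : ℝ := 2 * β * M ^ (β + 1 / 2)
  have h_kernel {x x' : EuclideanSpace ℝ ι} (hx : (∀ j, 0 ≤ x (e j)) ∧ ‖x‖ ≤ R)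
      (hx' : (∀ j, 0 ≤ x' (e j)) ∧ ‖x'‖ ≤ R) {y : ι → ℝ} (hy : y ∈ S) :
      |faceKernel e β b c h y x.ofLp - faceKernel e β b c h y x'.ofLp| ≤
        N * dist x x' * (1 + ∑ i, y i ^ 2) ^ (-β) := by
    have hT₁ := one_le_one_add_sum_sq y
    have hT := zero_lt_one.trans_le hT₁
    calc |faceKernel e β b c h y x.ofLp - faceKernel e β b c h y x'.ofLp|
        ≤ 2 * β * ((1 + ∑ i, y i ^ 2) / M) ^ (-β - 1 / 2) * dist x x' :=
          abs_faceKernel_sub_le he hb hbc hβ hh (fun j => mul_nonneg (hS₀ y hy j) (hx.1 j))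
            (fun j => mul_nonneg (hS₀ y hy j) (hx'.1 j)) (by positivity)
            ((div_le_iff₀' hM).2 (h_dist x hx.2 y)) ((div_le_iff₀' hM).2 (h_dist x' hx'.2 y))
      _ ≤ 2 * β * (M ^ (β + 1 / 2) * (1 + ∑ i, y i ^ 2) ^ (-β)) * dist x x' := by
          gcongr
          rw [← neg_add']
          refine (rpow_neg_le_mul_rpow_neg hT hM (mul_div_cancel₀ _ hM.ne').ge
            (by positivity)).trans ?_
          gcongr
          linarith
      _ = N * dist x x' * (1 + ∑ i, y i ^ 2) ^ (-β) := by ring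
  refine ⟨_, LipschitzOnWith.of_dist_le'
    (K := C * N * ∫ y in S, (1 + ∑ i, y i ^ 2) ^ (-r / 2)) fun x hx x' hx' => ?_⟩
  rw [dist_eq_norm, ← integral_sub
    (integrableOn_mul_faceKernel hb hbc hβ hh hS hS₀ hg hr hgC hx.1)
    (integrableOn_mul_faceKernel hb hbc hβ hh hS hS₀ hg hr hgC hx'.1)]
  refine (norm_integral_le_of_norm_le
    ((integrable_one_add_sum_sq_rpow hr).restrict.const_mul (C * (N * dist x x')))
    (ae_restrict_of_forall_mem hS fun y hy => ?_)).trans_eq ?_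
  · rw [← mul_sub]
    refine (abs_mul_le_mul_rpow_add (zero_lt_one.trans_le (one_le_one_add_sum_sq y)) (hgC y hy)
      (h_kernel hx hx' hy)).trans_eq ?_
    ring_nf
  · rw [integral_const_mul]
    ring

end Potential

section Face

variable {ι κ : Type*} [Fintype ι] [Fintype κ] [DecidableEq ι]

lemma dist_toLp_update (x : ι → ℝ) (i : ι) (s t : ℝ) :
    dist (WithLp.toLp 2 (Function.update x i s)) (WithLp.toLp 2 (Function.update x i t)) =
      dist s t := by
  have h_sub : WithLp.toLp 2 (Function.update x i s) - WithLp.toLp 2 (Function.update x i t) =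
      EuclideanSpace.single i (s - t) := by
    ext j
    rcases eq_or_ne j i with rfl | hj <;> simp [*]
  rw [dist_eq_norm, h_sub, PiLp.norm_single, dist_eq_norm]

lemma exists_lipschitzOnWith_integral_faceKernel_update {e : κ → ι} {β h r C : ℝ} {b c : κ → ℝ}
    {S : Set (ι → ℝ)} {g : (ι → ℝ) → ℝ} (he : e.Injective) (hb : ∀ j, 0 < b j)
    (hbc : ∀ j, b j < c j) (hβ : 0 ≤ β) (hh : h ≠ 0) (hS : MeasurableSet S)
    (hS₀ : ∀ y ∈ S, ∀ j, 0 ≤ y (e j)) (hg : AEStronglyMeasurable g (volume.restrict S))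
    (hr : Fintype.card ι < r)
    (hgC : ∀ y ∈ S, |g y| ≤ C * (1 + ∑ i, y i ^ 2) ^ (β - r / 2)) {x : ι → ℝ} {l : ι}
    (hx : ∀ j, e j ≠ l → 0 ≤ x (e j)) :
    ∃ L : NNReal, LipschitzOnWith L
      (fun s => ∫ y in S, g y * faceKernel e β b c h y (Function.update x l s))
      (Set.Ioo 0 1) := by
  set line : ℝ → EuclideanSpace ℝ ι := fun s => WithLp.toLp 2 (Function.update x l s)
  have h_line : LipschitzWith 1 line := .of_dist_le_mul fun s t => by
    simpa using (dist_toLp_update x l s t).le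
  obtain ⟨L, hL⟩ := exists_lipschitzOnWith_integral_faceKernel he hb hbc hβ hh hS hS₀ hg hr hgC
    (‖line 0‖ + 1)
  have h_maps : Set.MapsTo line (Set.Ioo 0 1)
      {x | (∀ j, 0 ≤ x (e j)) ∧ ‖x‖ ≤ ‖line 0‖ + 1} := by
    refine fun s hs => ⟨fun j => ?_, ?_⟩
    · rcases eq_or_ne (e j) l with hj | hj
      · simpa [line, hj] using hs.1.le
      · simpa [line, hj] using hx j hj
    · have h_dist : ‖line s - line 0‖ ≤ 1 := by
        rw [← dist_eq_norm, dist_toLp_update, dist_zero_right, norm_of_nonneg hs.1.le]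
        exact hs.2.le
      linarith [norm_le_norm_add_norm_sub' (line s) (line 0)]
  have h_comp := hL.comp h_line.lipschitzOnWith h_maps
  exact ⟨_, h_comp⟩

theorem tendsto_rpow_mul_deriv_integral_faceKernel_update {e : κ → ι} {α : κ → ℝ}
    {β h a r C : ℝ} {S : Set (ι → ℝ)} {ν : (ι → ℝ) → ℝ} (he : e.Injective) (hα : ∀ j, 0 < α j)
    (hβ : 0 ≤ β) (hh : h ≠ 0) (ha : 0 < a) (hS : MeasurableSet S)
    (hS₀ : ∀ y ∈ S, ∀ j, 0 ≤ y (e j)) (hν : AEStronglyMeasurable ν (volume.restrict S))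
    (hr : Fintype.card ι < r)
    (hνC : ∀ y ∈ S, |ν y| ≤ C * (1 + ∑ i, y i ^ 2) ^ (β - r / 2 - ∑ j, α j)) {x : ι → ℝ} {l : ι}
    (hx : ∀ j, e j ≠ l → 0 ≤ x (e j)) :
    Tendsto (fun t => t ^ a * deriv (fun s => ∫ y in S, ν y * (∏ j, y (e j) ^ (2 * α j)) *
      faceKernel e β α (fun j => 2 * α j) h y (Function.update x l s)) t) (𝓝[>] 0) (𝓝 0) := by
  have h_meas : AEStronglyMeasurable (fun y => ν y * ∏ j, y (e j) ^ (2 * α j))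
      (volume.restrict S) :=
    hν.mul (Measurable.aestronglyMeasurable (by fun_prop))
  have h_decay (y) (hy : y ∈ S) :
      |ν y * ∏ j, y (e j) ^ (2 * α j)| ≤ C * (1 + ∑ i, y i ^ 2) ^ (β - r / 2) := by
    simpa using abs_mul_prod_rpow_two_mul_le e (fun j => (hα j).le) (hS₀ y hy) (hνC y hy)
  have hα_lt (j : κ) : α j < 2 * α j := by linarith [hα j]
  obtain ⟨L, hL⟩ := exists_lipschitzOnWith_integral_faceKernel_update he hα hα_lt hβ hh hS
    hS₀ h_meas hr h_decay hx
  exact tendsto_rpow_mul_deriv_of_lipschitzOnWith ha one_pos hL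

end Face

section BoundaryCondition

lemma measurableSet_forall_imp_pos {ι : Type*} [Countable ι] (p : ι → Prop) :
    MeasurableSet {y : ι → ℝ | ∀ i, p i → 0 < y i} := by
  simp only [Set.ofPred_forall]
  exact .iInter fun i => .iInter fun _ => measurableSet_lt measurable_const (measurable_pi_apply i)

variable {ι : Type*} [Fintype ι] [DecidableEq ι] {p : ι → Prop} [DecidablePred p] {k : ι}

lemma sum_filter_eq_add_sum_subtype_ne (hk : p k) (α : ι → ℝ) :
    ∑ j with p j, α j = α k + ∑ j : {j // p j ∧ j ≠ k}, α j := by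
  rw [← Finset.add_sum_erase _ _ (by simpa using hk),
    Finset.sum_subtype (p := fun j => p j ∧ j ≠ k) _ (by simp [and_comm])]

lemma cast_card_subtype_ne (k : ι) : (Fintype.card {i // i ≠ k} : ℝ) = Fintype.card ι - 1 := by
  rw [Fintype.card_subtype_compl, Fintype.card_subtype_eq, Nat.cast_sub, Nat.cast_one]
  exact Fintype.card_pos_iff.2 ⟨k⟩

theorem potential_boundary_condition_other_index_general (α : ι → ℝ) (hα : ∀ j, p j → 0 < α j)
    (β γ : ℝ) (hβ : β = ((Fintype.card ι : ℝ) - 2) / 2 + ∑ j with p j, α j) (hk : p k)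
    (ν : ({i // i ≠ k} → ℝ) → ℝ) (c ε : ℝ) (hε : 0 < ε)
    (hν : AEStronglyMeasurable ν
      (volume.restrict {y : {i // i ≠ k} → ℝ | ∀ i, p i.1 → 0 < y i}))
    (hνbd : ∀ y : {i // i ≠ k} → ℝ, (∀ i, p i.1 → 0 < y i) →
      |ν y| ≤ c * (1 + ∑ i, y i ^ 2) ^ (-(1 - 2 * α k + ε) / 2))
    (I : (ι → ℝ) → ℝ)
    (hI : ∀ ξ : ι → ℝ, I ξ = -γ *
      ∫ y in {y : {i // i ≠ k} → ℝ | ∀ i, p i.1 → 0 < y i},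
        ν y * (∏ j : {j // p j ∧ j ≠ k}, y ⟨j.1, j.2.2⟩ ^ (2 * α j.1)) *
          (ξ k ^ 2 + ∑ i, (y i - ξ i.1) ^ 2) ^ (-β) *
          lauricellaFA β (fun j : {j // p j ∧ j ≠ k} => α j.1) (fun j => 2 * α j.1)
            (fun j => -4 * y ⟨j.1, j.2.2⟩ * ξ j.1 / (ξ k ^ 2 + ∑ i, (y i - ξ i.1) ^ 2)))
    (l : ι) (hl : p l) (hlk : l ≠ k) (ξ : ι → ℝ) (hξ : ∀ i, p i → i ≠ l → 0 < ξ i) :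
    Tendsto (fun t => t ^ (2 * α l) * deriv (fun s => I (Function.update ξ l s)) t)
      (𝓝[>] 0) (𝓝 0) := by
  set e : {j // p j ∧ j ≠ k} → {i // i ≠ k} := fun j => ⟨j.1, j.2.2⟩
  have he : e.Injective := fun i j hij => Subtype.ext (congrArg (fun i => i.1) hij)
  have h_sum := sum_filter_eq_add_sum_subtype_ne hk α
  have hβ₀ : 0 ≤ β := by
    have h_card : (2 : ℝ) ≤ Fintype.card ι := by
      exact_mod_cast Fintype.one_lt_card_iff.2 ⟨l, k, hlk⟩
    have h_nonneg : 0 ≤ ∑ j with p j, α j :=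
      Finset.sum_nonneg fun j hj => (hα j (Finset.mem_filter.1 hj).2).le
    linarith
  have h_exponent : -(1 - 2 * α k + ε) / 2 =
      β - (Fintype.card {i // i ≠ k} + ε) / 2 - ∑ j : {j // p j ∧ j ≠ k}, α j := by
    rw [hβ, h_sum, cast_card_subtype_ne]
    ring
  have h_restrict (s : ℝ) : (fun i : {i // i ≠ k} => Function.update ξ l s i) =
      Function.update (fun i : {i // i ≠ k} => ξ i) ⟨l, hlk⟩ s :=
    Function.update_comp_eq_of_injective ξ Subtype.val_injective ⟨l, hlk⟩ s
  have hI_update (s : ℝ) : I (Function.update ξ l s) = -γ *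
      ∫ y in {y : {i // i ≠ k} → ℝ | ∀ i, p i.1 → 0 < y i},
        ν y * (∏ j, y (e j) ^ (2 * α j)) * faceKernel e β (fun j => α j) (fun j => 2 * α j) (ξ k)
          y (Function.update (fun i => ξ i) ⟨l, hlk⟩ s) := by
    rw [hI, ← h_restrict, Function.update_of_ne hlk.symm]
    simp only [faceKernel, faceDistSq, ← mul_assoc, e]
  have h_lim := tendsto_rpow_mul_deriv_integral_faceKernel_update he
    (fun j => hα j j.2.1) hβ₀ (hξ k hk hlk.symm).ne' (mul_pos two_pos (hα l hl))
    (measurableSet_forall_imp_pos _) (fun y hy j => (hy (e j) j.2.1).le) hν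
    (lt_add_of_pos_right _ hε) (h_exponent ▸ hνbd) (x := fun i => ξ i) (l := ⟨l, hlk⟩)
    fun j hj => (hξ j j.2.1 fun h => hj (Subtype.ext h)).le
  simp only [hI_update, deriv_const_mul_field]
  simpa [mul_left_comm] using h_lim.const_mul (-γ)

end BoundaryCondition

/-- The single-layer potential `I_k` fulfils the weighted Neumann boundary condition on
a different face: for `l ≠ k`, `lim_{ξ_l→0⁺} ξ_l^{2α_l} ∂I_k/∂ξ_l = 0`. -/
theorem potential_boundary_condition_other_index (m n : ℕ) (hm : 2 < m) (hn : 1 ≤ n)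
    (hnm : n ≤ m) (α : Fin m → ℝ)
    (hα : ∀ j : Fin m, (j : ℕ) < n → 0 < 2 * α j ∧ 2 * α j < 1)
    (β γ : ℝ)
    (hβ : β = ((m : ℝ) - 2) / 2 + ∑ j ∈ Finset.univ.filter fun j : Fin m => (j : ℕ) < n, α j)
    (hγ : γ = 2 ^ (2 * β - (m : ℝ)) * Real.Gamma β / Real.pi ^ ((m : ℝ) / 2) *
      ∏ j ∈ Finset.univ.filter fun j : Fin m => (j : ℕ) < n,
        Real.Gamma (α j) / Real.Gamma (2 * α j))
    (k : Fin m) (hk : (k : ℕ) < n)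
    (ν : ({i : Fin m // i ≠ k} → ℝ) → ℝ) (c ε : ℝ) (hc : 0 < c) (hε : 0 < ε)
    (hνcont : ContinuousOn ν {y | ∀ i : {i : Fin m // i ≠ k}, (i.1 : ℕ) < n → 0 < y i})
    (hνbd : ∀ y : {i : Fin m // i ≠ k} → ℝ, (∀ i, (i.1 : ℕ) < n → 0 < y i) →
      |ν y| ≤ c * (1 + ∑ i, y i ^ 2) ^ (-(1 - 2 * α k + ε) / 2))
    (I : (Fin m → ℝ) → ℝ)
    (hI : ∀ ξ : Fin m → ℝ, I ξ = -γ *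
      ∫ y in {y : {i : Fin m // i ≠ k} → ℝ | ∀ i, (i.1 : ℕ) < n → 0 < y i},
        ν y * (∏ j : {j : Fin m // (j : ℕ) < n ∧ j ≠ k}, y ⟨j.1, j.2.2⟩ ^ (2 * α j.1)) *
          (ξ k ^ 2 + ∑ i, (y i - ξ i.1) ^ 2) ^ (-β) *
          lauricellaFA β (fun j : {j : Fin m // (j : ℕ) < n ∧ j ≠ k} => α j.1)
            (fun j => 2 * α j.1)
            (fun j => -4 * y ⟨j.1, j.2.2⟩ * ξ j.1 / (ξ k ^ 2 + ∑ i, (y i - ξ i.1) ^ 2)))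
    (l : Fin m) (hl : (l : ℕ) < n) (hlk : l ≠ k)
    (ξ : Fin m → ℝ) (hξ : ∀ i : Fin m, (i : ℕ) < n → i ≠ l → 0 < ξ i) :
    Filter.Tendsto
      (fun t : ℝ => t ^ (2 * α l) * deriv (fun s : ℝ => I (Function.update ξ l s)) t)
      (nhdsWithin 0 (Set.Ioi 0)) (nhds 0) := by
  exact potential_boundary_condition_other_index_general (p := fun j : Fin m => (j : ℕ) < n) α
    (fun j hj => by linarith [(hα j hj).1]) β γ (by simpa using hβ) hk ν c ε hε
    (hνcont.aestronglyMeasurable (measurableSet_forall_imp_pos _)) hνbd I hI l hl hlk ξ hξ
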